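/- arXiv:math/0502478 — 2 statements merged into one kernel-verified Lean document; each statement's English description precedes it below -/
import Mathlib

section
/- Let k be an algebraically closed field of characteristic zero, q a finite-dimensional Lie algebra over k, V a finite-dimensional q-module, and v ∈ V. If dim q·v = max_{x ∈ V} dim q·x (the tangent space of the orbit of v has maximal dimension), then s·w ∈ q·v for every s ∈ q_v and every w ∈ V (i.e., q_v acts trivially on V/q·v), and consequently ind(q_v, (V/q·v)*) = ind(q, V*). -/
/-!
If the orbit of `v` has maximal dimension, then the stabiliser `q_v` acts trivially on
the quotient `V/q.v` and `ind(q_v, (V/q.v)^*) = ind(q, V^*)`.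
-/

open Module

namespace Stmt

variable (k : Type*) [Field k]
variable (L : Type*) [LieRing L] [LieAlgebra k L]
variable (M : Type*) [AddCommGroup M] [Module k M] [LieRingModule L M] [LieModule k L M]

/-- The linear map `s ↦ s·v = ⁅s, v⁆`. -/
def actAt (v : M) : L →ₗ[k] M where
  toFun s := ⁅s, v⁆
  map_add' a b := add_lie a b v
  map_smul' c a := smul_lie c a v

/-- The tangent space `q·v = {s·v : s ∈ q}` of the orbit of `v`. -/
def orbit (v : M) : Submodule k M := LinearMap.range (actAt k L M v)

/-- The stabiliser subalgebra `q_v = {s ∈ q : s·v = 0}`. -/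
def stab (v : M) : LieSubalgebra k L where
  carrier := {s | ⁅s, v⁆ = 0}
  add_mem' := by intro a b ha hb; simp only [Set.mem_setOf_eq, add_lie] at *; rw [ha, hb, add_zero]
  zero_mem' := by simp
  smul_mem' := by intro c a ha; simp only [Set.mem_setOf_eq, smul_lie] at *; rw [ha, smul_zero]
  lie_mem' := by
    intro a b ha hb; simp only [Set.mem_setOf_eq, lie_lie] at *; rw [ha, hb]; simp

/-- The index of the Lie module `M`:
`ind(q, M) = dim M − max_{ξ ∈ M*} dim q·ξ`, where the coadjoint action on the dual module
is `(s·ξ)(m) = −ξ(s·m)`. -/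
noncomputable def lieIndex : ℕ :=
  finrank k M - ⨆ ξ : Module.Dual k M, finrank k (orbit k L (Module.Dual k M) ξ)

/-- `{s ∈ q : s·v = 0 and s·w ∈ q·v}`. -/
def relStab (v w : M) : Submodule k L where
  carrier := {s | ⁅s, v⁆ = 0 ∧ ⁅s, w⁆ ∈ orbit k L M v}
  add_mem' := by
    rintro a b ⟨ha1, ha2⟩ ⟨hb1, hb2⟩
    exact ⟨by rw [add_lie, ha1, hb1, add_zero], by rw [add_lie]; exact add_mem ha2 hb2⟩
  zero_mem' := by constructor <;> simp
  smul_mem' := by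
    rintro c a ⟨ha1, ha2⟩
    exact ⟨by rw [smul_lie, ha1, smul_zero], by rw [smul_lie]; exact Submodule.smul_mem _ c ha2⟩

/-- The orbit `q·v` as a Lie submodule over the stabiliser `q_v`. -/
def orbitLS (v : M) : LieSubmodule k ↥(stab k L M v) M :=
  { orbit k L M v with
    lie_mem := by
      rintro x m ⟨t, rfl⟩
      show ⁅(x : L), _⁆ ∈ orbit k L M v
      have hx : ⁅(x : L), v⁆ = 0 := x.2
      have : ⁅(x : L), (actAt k L M v) t⁆ = actAt k L M v ⁅(x : L), t⁆ := by
        show ⁅(x : L), ⁅t, v⁆⁆ = ⁅⁅(x : L), t⁆, v⁆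
        rw [lie_lie, hx, lie_zero, sub_zero]
      rw [this]
      exact ⟨_, rfl⟩ }

/-!
Suppose `A u = 0` but `B u ∉ range A`, and let `σ` be a linear section of `A` over its range. Then
`(y, c) ↦ y + c • B u` is injective on `range A × k`, hence so is its perturbation
`(y, c) ↦ y + c • B u + t • B (σ y)` for all but finitely many `t`. For `t ≠ 0` the latter equals
`(A + t • B) (σ y + c • t⁻¹ • u)`, so `A + t • B` has larger rank than `A`.

The maps `s ↦ s·v` and `s ↦ s·w` span the pencil `s ↦ s·(v + t w)`, so when the orbit of `v` has
maximal dimension, `q_v` acts trivially on `V/q·v`. Both indices then equal `dim V - dim q·v`: for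
`V*` by the identification `V** = V`, and for `(V/q·v)*` because `q_v` acts on it by zero.
-/

section Pencil

variable {k} {U W : Type*} [AddCommGroup U] [Module k U] [AddCommGroup W] [Module k W]

theorem finite_setOf_not_injective_add_smul [FiniteDimensional k U] {A : U →ₗ[k] W}
    (hA : Function.Injective A) (B : U →ₗ[k] W) :
    {t : k | ¬ Function.Injective (A + t • B)}.Finite := by
  obtain ⟨P, hP⟩ := A.exists_leftInverse_of_injective (LinearMap.ker_eq_bot.mpr hA)
  have hPA (u : U) : P (A u) = u := LinearMap.congr_fun hP u
  have eigenvalues_finite : {t : k | Module.End.HasEigenvalue (P ∘ₗ B) (-t⁻¹)}.Finite :=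
    (Module.End.finite_hasEigenvalue (P ∘ₗ B)).preimage
      (neg_injective.comp inv_injective).injOn
  refine eigenvalues_finite.subset fun t ht ↦ ?_
  have ht₀ : t ≠ 0 := by
    rintro rfl
    exact ht (by simpa only [zero_smul, add_zero] using hA)
  obtain ⟨u, hu, hu₀⟩ : ∃ u, (A + t • B) u = 0 ∧ u ≠ 0 := by
    simpa only [Set.mem_ofPred_eq, injective_iff_map_eq_zero, not_forall, exists_prop] using ht
  have hPu : u + t • P (B u) = 0 := by
    simpa only [LinearMap.add_apply, LinearMap.smul_apply, map_add, map_smul, hPA, map_zero]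
      using congrArg P hu
  refine Module.End.hasEigenvalue_of_hasEigenvector (x := u)
    ⟨Module.End.mem_eigenspace_iff.mpr ?_, hu₀⟩
  calc P (B u) = t⁻¹ • t • P (B u) := (inv_smul_smul₀ ht₀ _).symm
    _ = -t⁻¹ • u := by rw [eq_neg_of_add_eq_zero_right hPu, smul_neg, neg_smul]

theorem exists_finrank_range_lt_finrank_range_add_smul [Infinite k] [FiniteDimensional k W]
    {A B : U →ₗ[k] W} {u : U} (hu : A u = 0) (hBu : B u ∉ LinearMap.range A) :
    ∃ t : k, finrank k (LinearMap.range A) < finrank k (LinearMap.range (A + t • B)) := by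
  obtain ⟨σ, hσ⟩ := A.rangeRestrict.exists_rightInverse_of_surjective A.range_rangeRestrict
  have hAσ (y : LinearMap.range A) : A (σ y) = y :=
    congrArg Subtype.val (LinearMap.congr_fun hσ y)
  let F : LinearMap.range A × k →ₗ[k] W :=
    (LinearMap.range A).subtype.coprod (LinearMap.toSpanSingleton k W (B u))
  let G : LinearMap.range A × k →ₗ[k] W := B ∘ₗ σ ∘ₗ LinearMap.fst k _ k
  have hF : Function.Injective F := by
    have hBu₀ : B u ≠ 0 := fun h ↦ hBu (h ▸ zero_mem _)
    have disjoint_ranges : Disjoint (LinearMap.range (LinearMap.range A).subtype)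
        (LinearMap.range (LinearMap.toSpanSingleton k W (B u))) := by
      rwa [Submodule.range_subtype, LinearMap.range_toSpanSingleton,
        Submodule.disjoint_span_singleton' hBu₀]
    rw [← LinearMap.ker_eq_bot, LinearMap.ker_coprod_of_disjoint_range _ _ disjoint_ranges,
      Submodule.ker_subtype, LinearMap.ker_toSpanSingleton k hBu₀, Submodule.prod_bot]
  obtain ⟨t, ht⟩ := ((finite_setOf_not_injective_add_smul hF G).insert 0).exists_notMem
  obtain ⟨ht₀, hFG⟩ : t ≠ 0 ∧ Function.Injective (F + t • G) := by
    simpa only [Set.mem_insert_iff, Set.mem_ofPred_eq, not_or, not_not] using ht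
  have range_le : LinearMap.range (F + t • G) ≤ LinearMap.range (A + t • B) := by
    rintro _ ⟨⟨y, c⟩, rfl⟩
    refine ⟨σ y + c • t⁻¹ • u, ?_⟩
    simp only [F, G, LinearMap.add_apply, LinearMap.smul_apply, LinearMap.coprod_apply,
      LinearMap.comp_apply, LinearMap.fst_apply, LinearMap.toSpanSingleton_apply,
      Submodule.subtype_apply, map_add, map_smul, hAσ, hu, zero_add, inv_smul_smul₀ ht₀]
    abel
  refine ⟨t, Nat.lt_of_succ_le ?_⟩
  calc finrank k (LinearMap.range A) + 1
      = finrank k (LinearMap.range (F + t • G)) := by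
        rw [LinearMap.finrank_range_of_inj hFG, Module.finrank_prod, Module.finrank_self]
    _ ≤ finrank k (LinearMap.range (A + t • B)) := Submodule.finrank_mono range_le

end Pencil

theorem actAt_add_smul (v w : M) (t : k) :
    actAt k L M (v + t • w) = actAt k L M v + t • actAt k L M w := by
  ext s
  simp only [actAt, LinearMap.coe_mk, AddHom.coe_mk, LinearMap.add_apply, LinearMap.smul_apply,
    lie_add, lie_smul]

theorem lie_mem_orbit_of_finrank_orbit_add_smul_le [Infinite k] [FiniteDimensional k M] {v w : M}
    (hmax : ∀ t : k, finrank k (orbit k L M (v + t • w)) ≤ finrank k (orbit k L M v))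
    {s : L} (hs : s ∈ stab k L M v) : ⁅s, w⁆ ∈ orbit k L M v := by
  by_contra hsw
  obtain ⟨t, ht⟩ := exists_finrank_range_lt_finrank_range_add_smul
    (A := actAt k L M v) (B := actAt k L M w) hs hsw
  rw [← actAt_add_smul] at ht
  exact (hmax t).not_gt ht

theorem finrank_orbit_le_iSup [FiniteDimensional k M] (x : M) :
    finrank k (orbit k L M x) ≤ ⨆ y : M, finrank k (orbit k L M y) :=
  le_ciSup ⟨finrank k M, Set.forall_mem_range.mpr fun _ ↦ Submodule.finrank_le _⟩ x

theorem orbit_dualEval (x : M) :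
    orbit k L (Dual k (Dual k M)) (Dual.eval k M x) = (orbit k L M x).map (Dual.eval k M) := by
  have actAt_dualEval :
      actAt k L (Dual k (Dual k M)) (Dual.eval k M x) = Dual.eval k M ∘ₗ actAt k L M x := by
    ext s f
    simp [actAt]
  rw [orbit, actAt_dualEval, LinearMap.range_comp, orbit]

theorem finrank_orbit_evalEquiv [FiniteDimensional k M] (x : M) :
    finrank k (orbit k L (Dual k (Dual k M)) (evalEquiv k M x)) = finrank k (orbit k L M x) := by
  rw [← (evalEquiv k M).finrank_map_eq (orbit k L M x), evalEquiv_toLinearMap, ← orbit_dualEval,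
    ← evalEquiv_toLinearMap, LinearEquiv.coe_coe]

theorem lieIndex_dual [FiniteDimensional k M] :
    lieIndex k L (Dual k M) = finrank k M - ⨆ x : M, finrank k (orbit k L M x) := by
  rw [lieIndex, Subspace.dual_finrank_eq, ← (evalEquiv k M).surjective.iSup_comp]
  simp only [finrank_orbit_evalEquiv]

instance instIsTrivialDual [LieModule.IsTrivial L M] : LieModule.IsTrivial L (Dual k M) where
  trivial s f := by
    ext m
    rw [Dual.lie_apply, trivial_lie_zero, map_zero, neg_zero, LinearMap.zero_apply]

theorem finrank_orbit_of_isTrivial [LieModule.IsTrivial L M] (x : M) :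
    finrank k (orbit k L M x) = 0 := by
  have orbit_eq_bot : orbit k L M x = ⊥ :=
    LinearMap.range_eq_bot.mpr (LinearMap.ext fun s ↦ trivial_lie_zero L M s x)
  rw [orbit_eq_bot, finrank_bot]

theorem lieIndex_of_isTrivial [LieModule.IsTrivial L M] : lieIndex k L M = finrank k M := by
  simp only [lieIndex, finrank_orbit_of_isTrivial, ciSup_const, Nat.sub_zero]

theorem isTrivial_quotient_iff (N : LieSubmodule k L M) :
    LieModule.IsTrivial L (M ⧸ N) ↔ ∀ (s : L) (m : M), ⁅s, m⁆ ∈ N := by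
  have lie_mk_eq_zero_iff (s : L) (m : M) :
      ⁅s, LieSubmodule.Quotient.mk' N m⁆ = 0 ↔ ⁅s, m⁆ ∈ N := by
    rw [← LieModuleHom.map_lie, LieSubmodule.Quotient.mk_eq_zero]
  refine ⟨fun _ s m ↦ (lie_mk_eq_zero_iff s m).mp (trivial_lie_zero L _ s _), fun h ↦ ⟨fun s ↦ ?_⟩⟩
  exact (LieSubmodule.Quotient.surjective_mk' N).forall.mpr fun m ↦
    (lie_mk_eq_zero_iff s m).mpr (h s m)

theorem finrank_quotient_orbitLS [FiniteDimensional k M] (v : M) :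
    finrank k (M ⧸ orbitLS k L M v) = finrank k M - finrank k (orbit k L M v) :=
  (orbit k L M v).finrank_quotient

theorem index_eq_of_max_orbit_general [Infinite k] [FiniteDimensional k M] (v : M)
    (hmax : finrank k (orbit k L M v) = ⨆ x : M, finrank k (orbit k L M x)) :
    (∀ s : L, s ∈ stab k L M v → ∀ w : M, ⁅s, w⁆ ∈ orbit k L M v) ∧
    lieIndex k ↥(stab k L M v) (Module.Dual k (M ⧸ orbitLS k L M v)) =
      lieIndex k L (Module.Dual k M) := by
  have stab_lie_mem : ∀ s ∈ stab k L M v, ∀ w : M, ⁅s, w⁆ ∈ orbit k L M v := fun s hs w ↦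
    lie_mem_orbit_of_finrank_orbit_add_smul_le k L M
      (fun t ↦ hmax ▸ finrank_orbit_le_iSup k L M (v + t • w)) hs
  refine ⟨stab_lie_mem, ?_⟩
  have : LieModule.IsTrivial (stab k L M v) (M ⧸ orbitLS k L M v) :=
    (isTrivial_quotient_iff k _ M _).mpr fun s ↦ stab_lie_mem s s.2
  calc lieIndex k (stab k L M v) (Dual k (M ⧸ orbitLS k L M v))
      = finrank k (Dual k (M ⧸ orbitLS k L M v)) := lieIndex_of_isTrivial ..
    _ = finrank k (M ⧸ orbitLS k L M v) := Subspace.dual_finrank_eq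
    _ = finrank k M - finrank k (orbit k L M v) := finrank_quotient_orbitLS k L M v
    _ = lieIndex k L (Dual k M) := by rw [hmax, lieIndex_dual]

/-- If `dim q·v` is maximal, then `q_v` acts trivially on `V/q·v` and the index of
`(V/q·v)*` over `q_v` equals the index of `V*` over `q`. -/
theorem index_eq_of_max_orbit [IsAlgClosed k] [CharZero k]
    [FiniteDimensional k L] [FiniteDimensional k M] (v : M)
    (hmax : finrank k (orbit k L M v) = ⨆ x : M, finrank k (orbit k L M x)) :
    (∀ s : L, s ∈ stab k L M v → ∀ w : M, ⁅s, w⁆ ∈ orbit k L M v) ∧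
    lieIndex k ↥(stab k L M v) (Module.Dual k (M ⧸ orbitLS k L M v)) =
      lieIndex k L (Module.Dual k M) := by
  exact index_eq_of_max_orbit_general k L M v hmax

end Stmt
end

section
/- Let k be a field of characteristic zero, q a finite-dimensional Lie algebra over k, and V, W finite-dimensional q-modules. Assume that for every v ∈ V there exists v₀ ∈ V such that {s ∈ q : s·v = 0 and s·v₀ ∈ q·v} = 0. Then for every (w,v) ∈ W ⊕ V there exists u₀ ∈ W ⊕ V such that {s ∈ q : s·(w,v) = 0 and s·u₀ ∈ q·(w,v)} = 0; consequently ind(q_{(w,v)}, ((W⊕V)/q·(w,v))*) = dim V + dim W − dim q for every (w,v), so W ⊕ V has good index behaviour and ind(q, (V ⊕ W)*) = dim V + dim W − dim q. -/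
/-!
If `V` has good index behaviour witnessed by generic trivial relative stabilisers, then
`W ⊕ V` has good index behaviour for every module `W`, and
`ind(q, (V ⊕ W)*) = dim V + dim W − dim q`.
-/

open Module

namespace Stmt

variable (k : Type*) [Field k]
variable (L : Type*) [LieRing L] [LieAlgebra k L]
variable (M : Type*) [AddCommGroup M] [Module k M] [LieRingModule L M] [LieModule k L M]

variable (N : Type*) [AddCommGroup N] [Module k N] [LieRingModule L N] [LieModule k L N]

/-- The componentwise Lie module structure on `M × N`. -/
instance instLieRingModuleProd : LieRingModule L (M × N) where
  bracket s p := (⁅s, p.1⁆, ⁅s, p.2⁆)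
  add_lie x y p := Prod.ext (add_lie x y p.1) (add_lie x y p.2)
  lie_add x p q := Prod.ext (lie_add x p.1 q.1) (lie_add x p.2 q.2)
  leibniz_lie x y p := Prod.ext (leibniz_lie x y p.1) (leibniz_lie x y p.2)

instance instLieModuleProd : LieModule k L (M × N) where
  smul_lie t x p := Prod.ext (smul_lie t x p.1) (smul_lie t x p.2)
  lie_smul t x p := Prod.ext (lie_smul t x p.1) (lie_smul t x p.2)

/-!
A vector `u` with trivial stabiliser makes `s ↦ s·ev_u` injective on the bidual, so the maximal
orbit dimension in `M**` is `dim q` and `ind(q, M*) = dim M - dim q`; as `s ↦ s·u` embeds `q` in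
`M`, this subtraction of natural numbers is never truncated. The condition `relStab v v₀ = ⊥` says
precisely that the class of `v₀` in `M / q·v` has trivial stabiliser in `q_v`. Passing from
`M` to `M / q·v` and from `q` to `q_v` lowers both dimensions by `dim q·v`, so the index does not
depend on `v`. Finally, an equivariant map sends relative stabilisers into relative stabilisers, so
the condition lifts along equivariant surjections such as `W ⊕ V → V`.
-/

/-- The second projection `M × N → N` as a homomorphism of Lie modules, for the componentwise
structure `instLieModuleProd`. -/
def prodSnd : M × N →ₗ⁅k,L⁆ N :=
  { LinearMap.snd k M N with map_lie' := rfl }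

section

variable {k L M N}

lemma actAt_injective_iff {v : M} :
    Function.Injective (actAt k L M v) ↔ stab k L M v = ⊥ := by
  rw [← LinearMap.ker_eq_bot, ← LieSubalgebra.toSubmodule_eq_bot]
  rfl

lemma finiteDimensional_of_stab_eq_bot [FiniteDimensional k M] {u : M}
    (hu : stab k L M u = ⊥) : FiniteDimensional k L :=
  .of_injective (actAt k L M u) (actAt_injective_iff.mpr hu)

lemma finrank_orbit_add_finrank_stab [FiniteDimensional k L] (v : M) :
    finrank k (orbit k L M v) + finrank k (stab k L M v) = finrank k L :=
  (actAt k L M v).finrank_range_add_finrank_ker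

lemma finrank_orbit_le [FiniteDimensional k L] (v : M) :
    finrank k (orbit k L M v) ≤ finrank k L :=
  (actAt k L M v).finrank_range_le

lemma finrank_orbit_of_stab_eq_bot {v : M} (hv : stab k L M v = ⊥) :
    finrank k (orbit k L M v) = finrank k L :=
  LinearMap.finrank_range_of_inj (actAt_injective_iff.mpr hv)

lemma stab_dual_eval (u : M) :
    stab k L (Dual k (Dual k M)) (Dual.eval k M u) = stab k L M u := by
  ext s
  change ⁅s, Dual.eval k M u⁆ = 0 ↔ ⁅s, u⁆ = 0
  rw [← forall_dual_apply_eq_zero_iff k ⁅s, u⁆, LinearMap.ext_iff]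
  simp

lemma lieIndex_eq_of_stab_eq_bot [FiniteDimensional k L] {ξ : Dual k M}
    (hξ : stab k L (Dual k M) ξ = ⊥) : lieIndex k L M = finrank k M - finrank k L := by
  have hle : ∀ η : Dual k M, finrank k (orbit k L (Dual k M) η) ≤ finrank k L := finrank_orbit_le
  have hbdd : BddAbove (Set.range fun η : Dual k M ↦ finrank k (orbit k L (Dual k M) η)) :=
    ⟨finrank k L, Set.forall_mem_range.mpr hle⟩
  have hmax : ⨆ η : Dual k M, finrank k (orbit k L (Dual k M) η) = finrank k L :=
    le_antisymm (ciSup_le hle) (finrank_orbit_of_stab_eq_bot hξ ▸ le_ciSup hbdd ξ)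
  rw [lieIndex, hmax]

theorem lieIndex_dual_eq_of_stab_eq_bot [FiniteDimensional k M] {u : M}
    (hu : stab k L M u = ⊥) : lieIndex k L (Dual k M) = finrank k M - finrank k L := by
  have := finiteDimensional_of_stab_eq_bot hu
  rw [lieIndex_eq_of_stab_eq_bot ((stab_dual_eval u).trans hu), Subspace.dual_finrank_eq]

lemma relStab_zero (w : M) : relStab k L M 0 w = (stab k L M w).toSubmodule := by
  ext s
  simp [relStab, stab, orbit, actAt, eq_comm]

lemma mem_stab_mk_iff {v w : M} {s : stab k L M v} :
    s ∈ stab k (stab k L M v) (M ⧸ orbitLS k L M v) (LieSubmodule.Quotient.mk w) ↔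
      (s : L) ∈ relStab k L M v w :=
  (LieSubmodule.Quotient.mk_eq_zero' (N := orbitLS k L M v)).trans
    (and_iff_right s.2).symm

lemma stab_mk_eq_bot_iff {v w : M} :
    stab k (stab k L M v) (M ⧸ orbitLS k L M v) (LieSubmodule.Quotient.mk w) = ⊥ ↔
      relStab k L M v w = ⊥ := by
  simp only [LieSubalgebra.eq_bot_iff, Submodule.eq_bot_iff, mem_stab_mk_iff]
  exact ⟨fun h s hs ↦ congrArg Subtype.val (h ⟨s, hs.1⟩ hs), fun h s hs ↦ Subtype.ext (h s hs)⟩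

lemma finiteDimensional_of_relStab_eq_bot [FiniteDimensional k M] {v w : M}
    (h : relStab k L M v w = ⊥) : FiniteDimensional k L := by
  refine finiteDimensional_of_stab_eq_bot (k := k) (u := (v, w)) ?_
  refine (LieSubalgebra.eq_bot_iff _).mpr fun s hs ↦ (Submodule.eq_bot_iff _).mp h s ?_
  obtain ⟨hsv, hsw⟩ : ⁅s, v⁆ = 0 ∧ ⁅s, w⁆ = 0 := Prod.mk_eq_zero.mp hs
  exact ⟨hsv, hsw ▸ zero_mem _⟩

lemma finrank_quotient_orbitLS_add_finrank [FiniteDimensional k L] [FiniteDimensional k M]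
    (v : M) :
    finrank k (M ⧸ orbitLS k L M v) + finrank k L = finrank k M + finrank k (stab k L M v) := by
  have hquot : finrank k (M ⧸ orbitLS k L M v) + finrank k (orbit k L M v) = finrank k M :=
    (orbit k L M v).finrank_quotient_add_finrank
  have horbit := finrank_orbit_add_finrank_stab (k := k) (L := L) v
  omega

theorem lieIndex_dual_quotient_orbitLS [FiniteDimensional k M] {v w : M}
    (h : relStab k L M v w = ⊥) :
    lieIndex k (stab k L M v) (Dual k (M ⧸ orbitLS k L M v)) = finrank k M - finrank k L := by
  have := finiteDimensional_of_relStab_eq_bot h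
  have : FiniteDimensional k (M ⧸ orbitLS k L M v) :=
    inferInstanceAs (FiniteDimensional k (M ⧸ orbit k L M v))
  have hdim := finrank_quotient_orbitLS_add_finrank (k := k) (L := L) v
  rw [lieIndex_dual_eq_of_stab_eq_bot (stab_mk_eq_bot_iff.mpr h)]
  omega

lemma relStab_le_relStab_map (f : M →ₗ⁅k,L⁆ N) (u u₀ : M) :
    relStab k L M u u₀ ≤ relStab k L N (f u) (f u₀) := by
  rintro s ⟨hsu, t, htu⟩
  have htu : ⁅t, u⁆ = ⁅s, u₀⁆ := htu
  refine ⟨?_, t, ?_⟩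
  · rw [← f.map_lie, hsu, map_zero]
  · change ⁅t, f u⁆ = ⁅s, f u₀⁆
    rw [← f.map_lie, htu, f.map_lie]

lemma exists_relStab_eq_bot_of_surjective (f : M →ₗ⁅k,L⁆ N) (hf : Function.Surjective f)
    (hN : ∀ v : N, ∃ v₀ : N, relStab k L N v v₀ = ⊥) (u : M) :
    ∃ u₀ : M, relStab k L M u u₀ = ⊥ := by
  obtain ⟨v₀, hv₀⟩ := hN (f u)
  obtain ⟨u₀, rfl⟩ := hf v₀
  exact ⟨u₀, le_bot_iff.mp (hv₀ ▸ relStab_le_relStab_map f u u₀)⟩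

theorem gib_sum_general [FiniteDimensional k M] (f : M →ₗ⁅k,L⁆ N) (hf : Function.Surjective f)
    (hN : ∀ v : N, ∃ v₀ : N, relStab k L N v v₀ = ⊥) :
    (∀ u : M, ∃ u₀ : M, relStab k L M u u₀ = ⊥) ∧
    (∀ u : M, lieIndex k (stab k L M u) (Dual k (M ⧸ orbitLS k L M u)) =
      finrank k M - finrank k L) ∧
    lieIndex k L (Dual k M) = finrank k M - finrank k L := by
  have hM := exists_relStab_eq_bot_of_surjective f hf hN
  refine ⟨hM, fun u ↦ ?_, ?_⟩
  · obtain ⟨u₀, hu₀⟩ := hM u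
    exact lieIndex_dual_quotient_orbitLS hu₀
  · obtain ⟨u₀, hu₀⟩ := hM 0
    rw [relStab_zero, LieSubalgebra.toSubmodule_eq_bot] at hu₀
    exact lieIndex_dual_eq_of_stab_eq_bot hu₀

end

/-- Adding any module to a module with good index behaviour and index
`dim V − dim q` preserves good index behaviour. -/
theorem gib_sum {k : Type*} [Field k] [CharZero k]
    {L : Type*} [LieRing L] [LieAlgebra k L] [FiniteDimensional k L]
    (V W : Type*) [AddCommGroup V] [Module k V] [LieRingModule L V] [LieModule k L V]
    [FiniteDimensional k V]
    [AddCommGroup W] [Module k W] [LieRingModule L W] [LieModule k L W]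
    [FiniteDimensional k W]
    (hV : ∀ v : V, ∃ v₀ : V, relStab k L V v v₀ = ⊥) :
    (∀ p : W × V, ∃ u₀ : W × V, relStab k L (W × V) p u₀ = ⊥) ∧
    (∀ p : W × V,
      lieIndex k ↥(stab k L (W × V) p) (Module.Dual k ((W × V) ⧸ orbitLS k L (W × V) p)) =
        finrank k V + finrank k W - finrank k L) ∧
    lieIndex k L (Module.Dual k (W × V)) = finrank k V + finrank k W - finrank k L := by
  simpa only [finrank_prod, add_comm (finrank k W)] using
    gib_sum_general (prodSnd k L W V) Prod.snd_surjective hV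

end Stmt
end
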